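/- Fix μ>0 and let Φ:(0,∞)×ℝ⁴ → ℝ⁵ be given by Φ(ρ,v) = (ρ√(1+μ²N(v)), μρv¹, μρv², μρv³, μρv⁴), whose image is ℝ^{1,4}₊ = {w∈ℝ⁵ : w⁰ > √((w¹)²+(w²)²+(w³)²+(w⁴)²)}. Then for every smooth function F on ℝ^{1,4}₊ and every (ρ,v)∈(0,∞)×ℝ⁴, writing G = F∘Φ, one has (□₍₁,₄₎F)(Φ(ρ,v)) = ∂²G/∂ρ² + (4/ρ)∂G/∂ρ − (1/(μ²ρ²))·(□G + μ²(deg(deg G) + 3·deg G)), where □ and deg act in the variable v and the ρ-derivatives are taken at (ρ,v). -/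

import Mathlib

noncomputable section

/-- `N(v) = (v¹)² + (v²)² + (v³)² + (v⁴)²` for `v ∈ ℝ⁴`. -/
def Nq (v : Fin 4 → ℝ) : ℝ := ∑ i, v i ^ 2

/-- The `i`-th standard basis vector of `ℝ⁴`. -/
def e4 (i : Fin 4) : Fin 4 → ℝ := Pi.single i 1

/-- The partial derivative `∂g/∂vⁱ` for functions on `ℝ⁴`. -/
def pd (i : Fin 4) (g : (Fin 4 → ℝ) → ℝ) (v : Fin 4 → ℝ) : ℝ := fderiv ℝ g v (e4 i)

/-- The Laplacian `□g = Σᵢ ∂²g/∂(vⁱ)²` on `ℝ⁴`. -/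
def lap (g : (Fin 4 → ℝ) → ℝ) (v : Fin 4 → ℝ) : ℝ := ∑ i, pd i (pd i g) v

/-- The degree operator `deg g = Σᵢ vⁱ ∂g/∂vⁱ` on `ℝ⁴`. -/
def degOp (g : (Fin 4 → ℝ) → ℝ) (v : Fin 4 → ℝ) : ℝ := ∑ i, v i * pd i g v

/-- The `j`-th standard basis vector of `ℝ⁵`. -/
def e5 (j : Fin 5) : Fin 5 → ℝ := Pi.single j 1

/-- The partial derivative `∂F/∂wʲ` for functions on `ℝ⁵`. -/
def pd5 (j : Fin 5) (F : (Fin 5 → ℝ) → ℝ) (w : Fin 5 → ℝ) : ℝ := fderiv ℝ F w (e5 j)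

/-- The wave operator `□₍₁,₄₎ = ∂²/∂(w⁰)² − Σᵢ ∂²/∂(wⁱ)²` on `ℝ⁵`. -/
def box14 (F : (Fin 5 → ℝ) → ℝ) (w : Fin 5 → ℝ) : ℝ :=
  pd5 0 (pd5 0 F) w - ∑ i : Fin 4, pd5 i.succ (pd5 i.succ F) w

/-- The region `ℝ^{1,4}₊ = {w : w⁰ > √((w¹)²+(w²)²+(w³)²+(w⁴)²)}`. -/
def upperRegion : Set (Fin 5 → ℝ) :=
  {w | Real.sqrt (w 1 ^ 2 + w 2 ^ 2 + w 3 ^ 2 + w 4 ^ 2) < w 0}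

/-- The hyperbolic coordinate map `Φ(ρ,v) = (ρ√(1+μ²N(v)), μρv¹, μρv², μρv³, μρv⁴)`. -/
def Phi (μ ρ : ℝ) (v : Fin 4 → ℝ) : Fin 5 → ℝ :=
  Fin.cons (ρ * Real.sqrt (1 + μ ^ 2 * Nq v)) (fun i => μ * ρ * v i)


def srt (μ : ℝ) (v : Fin 4 → ℝ) : ℝ := Real.sqrt (1 + μ ^ 2 * Nq v)

lemma Nq_nonneg (v : Fin 4 → ℝ) : 0 ≤ Nq v := Finset.sum_nonneg fun i _ => sq_nonneg (v i)

lemma one_add_pos (μ : ℝ) (v : Fin 4 → ℝ) : 0 < 1 + μ ^ 2 * Nq v := by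
  have := Nq_nonneg v
  positivity

lemma srt_pos (μ : ℝ) (v : Fin 4 → ℝ) : 0 < srt μ v := Real.sqrt_pos.2 (one_add_pos μ v)

lemma srt_sq (μ : ℝ) (v : Fin 4 → ℝ) : srt μ v ^ 2 = 1 + μ ^ 2 * Nq v :=
  Real.sq_sqrt (one_add_pos μ v).le

lemma isOpen_upper : IsOpen upperRegion := by
  unfold upperRegion
  apply isOpen_lt <;> fun_prop

lemma Phi_mem (μ ρ : ℝ) (hρ : 0 < ρ) (v : Fin 4 → ℝ) : Phi μ ρ v ∈ upperRegion := by
  have h0 : Phi μ ρ v 0 = ρ * srt μ v := rfl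
  have h1 : Phi μ ρ v 1 = μ * ρ * v 0 := rfl
  have h2 : Phi μ ρ v 2 = μ * ρ * v 1 := rfl
  have h3 : Phi μ ρ v 3 = μ * ρ * v 2 := rfl
  have h4 : Phi μ ρ v 4 = μ * ρ * v 3 := rfl
  show Real.sqrt _ < _
  rw [h0, h1, h2, h3, h4]
  have hs := srt_pos μ v
  rw [Real.sqrt_lt' (by positivity)]
  have h := srt_sq μ v
  have hN : Nq v = v 0 ^ 2 + v 1 ^ 2 + v 2 ^ 2 + v 3 ^ 2 := by
    simp [Nq, Fin.sum_univ_four]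
  rw [mul_pow ρ (srt μ v), h, hN]
  nlinarith [pow_pos hρ 2]

lemma diff_Nq : Differentiable ℝ Nq := by
  unfold Nq; fun_prop

lemma diff_srt (μ : ℝ) : Differentiable ℝ (srt μ) := by
  intro v
  unfold srt
  have := diff_Nq v
  exact DifferentiableAt.sqrt (by fun_prop) (one_add_pos μ v).ne'

lemma pd_coord (i j : Fin 4) (v : Fin 4 → ℝ) :
    pd i (fun u => u j) v = if j = i then 1 else 0 := by
  unfold pd e4
  rw [(hasFDerivAt_apply (𝕜 := ℝ) j v).fderiv]
  simp [Pi.single_apply]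

lemma pd_mul (i : Fin 4) {g h : (Fin 4 → ℝ) → ℝ} {v : Fin 4 → ℝ}
    (hg : DifferentiableAt ℝ g v) (hh : DifferentiableAt ℝ h v) :
    pd i (fun u => g u * h u) v = pd i g v * h v + g v * pd i h v := by
  unfold pd
  rw [fderiv_fun_mul hg hh]
  simp; ring

lemma pd_add (i : Fin 4) {g h : (Fin 4 → ℝ) → ℝ} {v : Fin 4 → ℝ}
    (hg : DifferentiableAt ℝ g v) (hh : DifferentiableAt ℝ h v) :
    pd i (fun u => g u + h u) v = pd i g v + pd i h v := by
  unfold pd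
  rw [fderiv_fun_add hg hh]
  simp

lemma pd_sum (i : Fin 4) {g : Fin 4 → (Fin 4 → ℝ) → ℝ} {v : Fin 4 → ℝ}
    (hg : ∀ j, DifferentiableAt ℝ (g j) v) :
    pd i (fun u => ∑ j, g j u) v = ∑ j, pd i (g j) v := by
  unfold pd
  rw [fderiv_fun_sum (fun j _ => hg j)]
  simp

lemma pd_const_mul (i : Fin 4) (c : ℝ) {h : (Fin 4 → ℝ) → ℝ} {v : Fin 4 → ℝ}
    (hh : DifferentiableAt ℝ h v) :
    pd i (fun u => c * h u) v = c * pd i h v := by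
  unfold pd
  rw [fderiv_const_mul hh]
  simp

lemma pd_Nq (i : Fin 4) (v : Fin 4 → ℝ) : pd i Nq v = 2 * v i := by
  have : Nq = fun u => ∑ j, u j * u j := by
    funext u; simp [Nq, pow_two]
  rw [this, pd_sum i (fun j => by fun_prop)]
  have : ∀ j, pd i (fun u => u j * u j) v = if j = i then 2 * v i else 0 := by
    intro j
    rw [pd_mul i (by fun_prop) (by fun_prop), pd_coord]
    split_ifs with h
    · subst h; ring
    · ring
  simp [this]

lemma pd_srt (μ : ℝ) (i : Fin 4) (v : Fin 4 → ℝ) :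
    pd i (srt μ) v = μ ^ 2 * v i * (srt μ v)⁻¹ := by
  have h1 : pd i (fun u => srt μ u * srt μ u) v = 2 * srt μ v * pd i (srt μ) v := by
    rw [pd_mul i (diff_srt μ v) (diff_srt μ v)]; ring
  have h2 : (fun u => srt μ u * srt μ u) = fun u => 1 + μ ^ 2 * Nq u := by
    funext u; rw [← srt_sq]; ring
  have hN := diff_Nq v
  rw [h2, pd_add i (by fun_prop) (by fun_prop), pd_const_mul i _ hN, pd_Nq] at h1
  have h3 : pd i (fun _ => (1 : ℝ)) v = 0 := by simp [pd]
  have := srt_pos μ v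
  rw [h3] at h1
  field_simp
  linarith

lemma diff_inv (μ : ℝ) : Differentiable ℝ (fun u => (srt μ u)⁻¹) :=
  fun v => (diff_srt μ v).inv (srt_pos μ v).ne'

lemma pd_inv (μ : ℝ) (i : Fin 4) (v : Fin 4 → ℝ) :
    pd i (fun u => (srt μ u)⁻¹) v = - μ ^ 2 * v i * (srt μ v)⁻¹ ^ 3 := by
  have h1 : pd i (fun u => srt μ u * (srt μ u)⁻¹) v = _ :=
    pd_mul i (diff_srt μ v) (diff_inv μ v)
  have h2 : (fun u => srt μ u * (srt μ u)⁻¹) = fun _ => 1 := by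
    funext u; exact mul_inv_cancel₀ (srt_pos μ u).ne'
  have h3 : pd i (fun _ => (1 : ℝ)) v = 0 := by simp [pd]
  have hs := srt_pos μ v
  rw [h2, h3, pd_srt] at h1
  have : srt μ v * pd i (fun u => (srt μ u)⁻¹) v = - (μ ^ 2 * v i * (srt μ v)⁻¹ * (srt μ v)⁻¹) := by
    linarith
  apply mul_left_cancel₀ hs.ne'
  rw [this]
  field_simp

lemma fderiv_expand (f : (Fin 5 → ℝ) → ℝ) (w x : Fin 5 → ℝ) :
    fderiv ℝ f w x = x 0 * pd5 0 f w + ∑ j : Fin 4, x j.succ * pd5 j.succ f w := by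
  have : x = ∑ j, x j • e5 j := by
    funext k
    simp [e5, Pi.single_apply]
  conv_lhs => rw [this]
  rw [map_sum, Fin.sum_univ_succ]
  simp [pd5]

lemma diff_Phi (μ ρ : ℝ) : Differentiable ℝ (Phi μ ρ) := by
  intro v
  rw [differentiableAt_pi]
  intro k
  refine Fin.cases ?_ (fun j => ?_) k
  · exact (diff_srt μ v).const_mul ρ
  · show DifferentiableAt ℝ (fun u : Fin 4 → ℝ => μ * ρ * u j) v
    fun_prop

lemma pd_comp (μ ρ : ℝ) (i : Fin 4) (f : (Fin 5 → ℝ) → ℝ) (v : Fin 4 → ℝ)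
    (hf : DifferentiableAt ℝ f (Phi μ ρ v)) :
    pd i (fun u => f (Phi μ ρ u)) v =
      ρ * μ ^ 2 * v i * (srt μ v)⁻¹ * pd5 0 f (Phi μ ρ v)
        + μ * ρ * pd5 i.succ f (Phi μ ρ v) := by
  have hP := diff_Phi μ ρ v
  have h1 : pd i (fun u => f (Phi μ ρ u)) v
      = fderiv ℝ f (Phi μ ρ v) (fderiv ℝ (Phi μ ρ) v (e4 i)) := by
    unfold pd
    have := fderiv_comp v hf hP
    rw [show (fun u => f (Phi μ ρ u)) = f ∘ Phi μ ρ from rfl, this]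
    rfl
  have h2 : ∀ k, fderiv ℝ (Phi μ ρ) v (e4 i) k = pd i (fun u => Phi μ ρ u k) v := by
    intro k
    unfold pd
    have := (hasFDerivAt_pi'.1 hP.hasFDerivAt k).fderiv
    rw [this]; rfl
  have h3 : pd i (fun u => Phi μ ρ u 0) v = ρ * (μ ^ 2 * v i * (srt μ v)⁻¹) := by
    rw [← pd_srt, ← pd_const_mul i ρ (diff_srt μ v)]; rfl
  have h4 : ∀ j : Fin 4, pd i (fun u => Phi μ ρ u j.succ) v = if j = i then μ * ρ else 0 := by
    intro j
    have : pd i (fun u => Phi μ ρ u j.succ) v = pd i (fun u => μ * ρ * u j) v := rfl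
    rw [this, pd_const_mul i _ (by fun_prop), pd_coord]
    simp
  rw [h1, fderiv_expand, h2, h3]
  simp only [h2, h4]
  simp only [ite_mul, one_mul, zero_mul, Finset.sum_ite_eq', Finset.mem_univ, if_true]
  ring

lemma deriv_comp_Phi (μ ρ : ℝ) (f : (Fin 5 → ℝ) → ℝ) (v : Fin 4 → ℝ)
    (hf : DifferentiableAt ℝ f (Phi μ ρ v)) :
    HasDerivAt (fun r => f (Phi μ r v))
      (srt μ v * pd5 0 f (Phi μ ρ v) + ∑ j : Fin 4, μ * v j * pd5 j.succ f (Phi μ ρ v)) ρ := by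
  have hP : HasDerivAt (fun r => Phi μ r v)
      (Fin.cons (srt μ v) (fun j => μ * v j) : Fin 5 → ℝ) ρ := by
    rw [hasDerivAt_pi]
    intro k
    refine Fin.cases ?_ (fun j => ?_) k
    · show HasDerivAt (fun r => r * srt μ v) (srt μ v) ρ
      simpa using (hasDerivAt_id ρ).mul_const (srt μ v)
    · show HasDerivAt (fun r => μ * r * v j) (μ * v j) ρ
      simpa using ((hasDerivAt_id ρ).const_mul μ).mul_const (v j)
  have := hf.hasFDerivAt.comp_hasDerivAt ρ hP
  rw [fderiv_expand] at this
  simp only [Fin.cons_zero, Fin.cons_succ] at this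
  exact this

/-- For every smooth `F` on `ℝ^{1,4}₊` and every `(ρ,v) ∈ (0,∞)×ℝ⁴`, with `G = F∘Φ`:
`(□₍₁,₄₎F)(Φ(ρ,v)) = ∂²G/∂ρ² + (4/ρ)∂G/∂ρ − (1/(μ²ρ²))·(□G + μ²(deg(deg G) + 3·deg G))`,
where `□` and `deg` act in `v` and the `ρ`-derivatives are taken at `(ρ,v)`. -/
theorem stmt2 (μ : ℝ) (hμ : 0 < μ) (F : (Fin 5 → ℝ) → ℝ)
    (hF : ContDiffOn ℝ (⊤ : ℕ∞) F upperRegion) (ρ : ℝ) (hρ : 0 < ρ) (v : Fin 4 → ℝ) :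
    box14 F (Phi μ ρ v) =
      deriv (deriv (fun r => F (Phi μ r v))) ρ
      + (4 / ρ) * deriv (fun r => F (Phi μ r v)) ρ
      - (1 / (μ ^ 2 * ρ ^ 2)) *
          (lap (fun u => F (Phi μ ρ u)) v
            + μ ^ 2 * (degOp (degOp (fun u => F (Phi μ ρ u))) v
                        + 3 * degOp (fun u => F (Phi μ ρ u)) v)) := by
  have hdF : ∀ w ∈ upperRegion, DifferentiableAt ℝ F w := fun w hw =>
    ((hF.contDiffAt (isOpen_upper.mem_nhds hw)).differentiableAt (by simp))
  have hdA : ∀ j, ∀ w ∈ upperRegion, DifferentiableAt ℝ (pd5 j F) w := by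
    intro j w hw
    have h1 := hF.contDiffAt (isOpen_upper.mem_nhds hw)
    have h2 : ContDiffAt ℝ 1 (fderiv ℝ F) w := h1.fderiv_right (by norm_cast)
    have h3 := h2.differentiableAt (by simp)
    unfold pd5
    exact h3.clm_apply (differentiableAt_const _)
  have hdC : ∀ j u, DifferentiableAt ℝ (fun u => pd5 j F (Phi μ ρ u)) u := fun j u =>
    DifferentiableAt.comp u (hdA j _ (Phi_mem μ ρ hρ u)) (diff_Phi μ ρ u)
  have hC := fun j i => pd_comp μ ρ i (pd5 j F) v (hdA j _ (Phi_mem μ ρ hρ v))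
  have hpd : ∀ i, pd i (fun u => F (Phi μ ρ u)) = fun u =>
      ρ * μ ^ 2 * (u i * (srt μ u)⁻¹ * pd5 0 F (Phi μ ρ u))
        + μ * ρ * pd5 i.succ F (Phi μ ρ u) := by
    intro i; funext u
    rw [pd_comp μ ρ i F u (hdF _ (Phi_mem μ ρ hρ u))]; ring
  have hdeg : degOp (fun u => F (Phi μ ρ u)) = fun u =>
      ρ * μ ^ 2 * (Nq u * (srt μ u)⁻¹ * pd5 0 F (Phi μ ρ u))
        + μ * ρ * ∑ j : Fin 4, u j * pd5 j.succ F (Phi μ ρ u) := by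
    funext u
    unfold degOp Nq
    simp only [hpd, Fin.sum_univ_four]
    ring
  have hi := diff_inv μ v
  have hN := diff_Nq v
  have hc : ∀ i : Fin 4, DifferentiableAt ℝ (fun u : Fin 4 → ℝ => u i) v := fun i => by fun_prop
  have hpd2 : ∀ i, pd i (pd i (fun u => F (Phi μ ρ u))) v =
      ρ * μ ^ 2 * (((srt μ v)⁻¹ - μ ^ 2 * v i ^ 2 * (srt μ v)⁻¹ ^ 3) * pd5 0 F (Phi μ ρ v)
        + v i * (srt μ v)⁻¹ * pd i (fun u => pd5 0 F (Phi μ ρ u)) v)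
      + μ * ρ * pd i (fun u => pd5 i.succ F (Phi μ ρ u)) v := by
    intro i
    have h1 := (hc i).fun_mul hi
    have h2 := h1.fun_mul (hdC 0 v)
    rw [hpd, pd_add i (h2.const_mul _) ((hdC _ v).const_mul _), pd_const_mul i _ h2,
      pd_const_mul i _ (hdC _ v), pd_mul i h1 (hdC 0 v), pd_mul i (hc i) hi, pd_coord, pd_inv]
    simp only [ite_mul, one_mul, zero_mul, Finset.sum_ite_eq', Finset.mem_univ, if_true]
    ring
  have hpdd : ∀ i, pd i (degOp (fun u => F (Phi μ ρ u))) v =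
      ρ * μ ^ 2 * ((2 * v i * (srt μ v)⁻¹ - Nq v * μ ^ 2 * v i * (srt μ v)⁻¹ ^ 3)
            * pd5 0 F (Phi μ ρ v)
        + Nq v * (srt μ v)⁻¹ * pd i (fun u => pd5 0 F (Phi μ ρ u)) v)
      + μ * ρ * (pd5 i.succ F (Phi μ ρ v)
        + ∑ j : Fin 4, v j * pd i (fun u => pd5 j.succ F (Phi μ ρ u)) v) := by
    intro i
    have h1 := hN.fun_mul hi
    have h2 := h1.fun_mul (hdC 0 v)
    have h3 : ∀ j : Fin 4, DifferentiableAt ℝ (fun u => u j * pd5 j.succ F (Phi μ ρ u)) v :=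
      fun j => (hc j).fun_mul (hdC _ v)
    have h4 : DifferentiableAt ℝ (fun u => ∑ j : Fin 4, u j * pd5 j.succ F (Phi μ ρ u)) v :=
      DifferentiableAt.fun_sum fun j _ => h3 j
    have h5 : ∀ j : Fin 4, pd i (fun u => u j * pd5 j.succ F (Phi μ ρ u)) v =
        (if j = i then 1 else 0) * pd5 j.succ F (Phi μ ρ v)
          + v j * pd i (fun u => pd5 j.succ F (Phi μ ρ u)) v := by
      intro j
      rw [pd_mul i (hc j) (hdC _ v), pd_coord]
    rw [hdeg, pd_add i (h2.const_mul _) (h4.const_mul _), pd_const_mul i _ h2,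
      pd_const_mul i _ h4, pd_sum i h3, pd_mul i h1 (hdC 0 v), pd_mul i hN hi, pd_Nq, pd_inv]
    simp only [h5, Finset.sum_add_distrib]
    simp only [ite_mul, one_mul, zero_mul, Finset.sum_ite_eq', Finset.mem_univ, if_true]
    ring
  have hr1 : ∀ r, 0 < r → deriv (fun r => F (Phi μ r v)) r =
      srt μ v * pd5 0 F (Phi μ r v) + ∑ j : Fin 4, μ * v j * pd5 j.succ F (Phi μ r v) :=
    fun r hr => (deriv_comp_Phi μ r F v (hdF _ (Phi_mem μ r hr v))).deriv
  have he : deriv (fun r => F (Phi μ r v)) =ᶠ[nhds ρ] fun r =>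
      srt μ v * pd5 0 F (Phi μ r v) + ∑ j : Fin 4, μ * v j * pd5 j.succ F (Phi μ r v) := by
    filter_upwards [lt_mem_nhds hρ] with r hr using hr1 r hr
  have hk := fun k => deriv_comp_Phi μ ρ (pd5 k F) v (hdA k _ (Phi_mem μ ρ hρ v))
  have hr2 := (((hk 0).const_mul (srt μ v)).fun_add
      (HasDerivAt.fun_sum (u := Finset.univ) fun (j : Fin 4) _ =>
        (hk j.succ).const_mul (μ * v j))).deriv
  rw [← he.deriv_eq] at hr2
  have hs := srt_pos μ v
  have hNs : Nq v = (srt μ v ^ 2 - 1) / μ ^ 2 := by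
    rw [srt_sq]; field_simp; ring
  have hNq : Nq v = v 0 ^ 2 + v 1 ^ 2 + v 2 ^ 2 + v 3 ^ 2 := by
    simp [Nq, Fin.sum_univ_four]
  set s := srt μ v with hsdef
  set w := Phi μ ρ v with hw
  set A := fun k => pd5 k F w with hA
  set B := fun k l => pd5 l (pd5 k F) w with hB
  set P := ∑ i : Fin 4, v i * B 0 i.succ + ∑ i : Fin 4, v i * B i.succ 0 with hP
  set R := ∑ i : Fin 4, ∑ j : Fin 4, v i * v j * B j.succ i.succ with hR
  set L := ∑ i : Fin 4, B i.succ i.succ with hL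
  set E := ∑ i : Fin 4, v i * A i.succ with hE
  have f1 : deriv (fun r => F (Phi μ r v)) ρ = s * A 0 + μ * E := by
    rw [hr1 ρ hρ, hE]; simp only [hA, Fin.sum_univ_four]; ring
  have f2 : deriv (deriv (fun r => F (Phi μ r v))) ρ
      = s ^ 2 * B 0 0 + s * μ * P + μ ^ 2 * R := by
    rw [hr2, hP, hR]; simp only [hB, Fin.sum_univ_four]; ring
  have f3 : degOp (fun u => F (Phi μ ρ u)) v = ρ * μ ^ 2 * Nq v * s⁻¹ * A 0 + μ * ρ * E := by
    rw [hdeg, hE]; simp only [hA, Fin.sum_univ_four]; ring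
  have f4 : lap (fun u => F (Phi μ ρ u)) v =
      ρ * μ ^ 2 * (4 * s⁻¹ - μ ^ 2 * Nq v * s⁻¹ ^ 3) * A 0
      + ρ ^ 2 * μ ^ 4 * Nq v * s⁻¹ ^ 2 * B 0 0 + ρ ^ 2 * μ ^ 3 * s⁻¹ * P
      + μ ^ 2 * ρ ^ 2 * L := by
    unfold lap
    simp only [hpd2, hC]
    rw [hP, hL, hNq]; simp only [hA, hB, Fin.sum_univ_four]; ring
  have f5 : degOp (degOp (fun u => F (Phi μ ρ u))) v =
      ρ * μ ^ 2 * (2 * Nq v * s⁻¹ - μ ^ 2 * Nq v ^ 2 * s⁻¹ ^ 3) * A 0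
      + ρ ^ 2 * μ ^ 4 * Nq v ^ 2 * s⁻¹ ^ 2 * B 0 0 + ρ ^ 2 * μ ^ 3 * Nq v * s⁻¹ * P
      + μ * ρ * E + μ ^ 2 * ρ ^ 2 * R := by
    rw [degOp]
    simp only [hpdd, hC]
    rw [hP, hR, hE, hNq]; simp only [hA, hB, Fin.sum_univ_four]; ring
  have f6 : box14 F w = B 0 0 - L := rfl
  rw [f1, f2, f3, f4, f5, f6, hNs]
  clear_value P R L E A B s
  field_simp
  ring
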